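/- arXiv:1107.0960 — 3 statements merged into one kernel-verified Lean document; each statement's English description precedes it below -/
import Mathlib

section
/- Let n ≥ 1, let f: ℝ → ℝ be a Schwartz function such that ∫_{ℝⁿ} f^{(k)}(|ξ|²) dξ ≠ 0 for every integer k ≥ n, and let V, V₀: ℝⁿ → [0,∞) be measurable, bounded functions each satisfying a bound V(x) ≤ A exp(−B|x|^{1+ε}) for some ε, A, B > 0. Suppose that for every λ > 0, ∫_{ℝⁿ}∫_{ℝⁿ} [f((|ξ|² + V(x))/λ) − f(|ξ|²/λ)] dξ dx = ∫_{ℝⁿ}∫_{ℝⁿ} [f((|ξ|² + V₀(x))/λ) − f(|ξ|²/λ)] dξ dx. Then ∫_{ℝⁿ} V(x)^k dx = ∫_{ℝⁿ} V₀(x)^k dx for every integer k ≥ n. -/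
open MeasureTheory Real

/-!
Taylor expansion of `f` at `‖ξ‖ ^ 2`, integrated over phase space, gives
`∫∫ (f (‖ξ‖ ^ 2 + t V) - f (‖ξ‖ ^ 2)) ~ ∑ k ≥ 1, (∫ f⁽ᵏ⁾(‖ξ‖ ^ 2) dξ) (∫ V ^ k dx) t ^ k / k!`
as `t → 0`: the rapid decay of the derivatives of `f` in `ξ` makes every remainder integrable.
Scaling `ξ` by `√λ` turns the trace at energy `λ` into `√λ ^ n` times this quantity at `t = λ⁻¹`,
so equal traces for large `λ` give equal asymptotic expansions, hence equal coefficients. The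
moment `∫ V ^ k` can be read off the `k`-th one as soon as `∫ f⁽ᵏ⁾(‖ξ‖ ^ 2) dξ ≠ 0`.
-/

open Filter Asymptotics Module Set
open scoped Nat Topology

lemma coeff_eq_zero_of_sum_isBigO_pow {𝕜 : Type*} [NormedField 𝕜] {l : Filter 𝕜} [l.NeBot]
    (hl : l ≤ 𝓝[≠] 0) {d : ℕ → 𝕜} {m : ℕ}
    (h : ∀ n, (fun t => ∑ k ∈ Finset.Ico m (n + 1), d k * t ^ k) =O[l] fun t => t ^ (n + 1))
    {k : ℕ} (hk : m ≤ k) : d k = 0 := by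
  induction k using Nat.strong_induction_on with
  | _ k ih =>
    have hsum (t : 𝕜) : ∑ j ∈ Finset.Ico m (k + 1), d j * t ^ j = d k * t ^ k := by
      refine Finset.sum_eq_single_of_mem k (Finset.mem_Ico.2 ⟨hk, k.lt_succ_self⟩) ?_
      intro j hj hjk
      obtain ⟨hmj, hjk'⟩ := Finset.mem_Ico.1 hj
      rw [ih j (by omega) hmj, zero_mul]
    have hlead : (fun t => d k * t ^ k) =O[l] fun t => t ^ (k + 1) := by
      simpa only [hsum] using h k
    have hpow : (fun t : 𝕜 => t ^ (k + 1)) =o[l] fun t => t ^ k :=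
      (isLittleO_pow_pow k.lt_succ_self).mono (hl.trans nhdsWithin_le_nhds)
    have hne : ∀ᶠ t in l, t ^ k ≠ 0 :=
      hl (eventually_mem_nhdsWithin.mono fun t ht => pow_ne_zero k ht)
    by_contra hdk
    exact isLittleO_irrefl hne.frequently
      ((isLittleO_const_mul_left_iff hdk).1 (hlead.trans_isLittleO hpow))

lemma exists_mem_uIcc_eq_taylor_sum_add {f : ℝ → ℝ} {n : ℕ} (hf : ContDiff ℝ (n + 1) f)
    (a s : ℝ) :
    ∃ y ∈ uIcc a (a + s), f (a + s) =
      ∑ k ∈ Finset.range (n + 1), iteratedDeriv k f a * (s ^ k / k !) +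
        iteratedDeriv (n + 1) f y * (s ^ (n + 1) / (n + 1)!) := by
  rcases eq_or_ne s 0 with rfl | hs
  · exact ⟨a, by simp, by simp [Finset.sum_range_succ']⟩
  have hne : a ≠ a + s := by simpa using hs
  obtain ⟨y, hy, hyeq⟩ := taylor_mean_remainder_lagrange_iteratedDeriv hne hf.contDiffOn
  refine ⟨y, uIoo_subset_uIcc_self hy, ?_⟩
  have htaylor : taylorWithinEval f n (uIcc a (a + s)) a (a + s) =
      ∑ k ∈ Finset.range (n + 1), iteratedDeriv k f a * (s ^ k / k !) := by
    rw [taylor_within_apply]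
    refine Finset.sum_congr rfl fun k hk => ?_
    have hfk : ContDiff ℝ k f := hf.of_le (by exact_mod_cast (Finset.mem_range.1 hk).le)
    rw [iteratedDerivWithin_eq_iteratedDeriv (uniqueDiffOn_uIcc hne) hfk.contDiffAt
      left_mem_uIcc, smul_eq_mul, add_sub_cancel_left]
    ring
  rw [htaylor, add_sub_cancel_left, mul_div_assoc] at hyeq
  linarith

lemma schwartz_exists_norm_iteratedDeriv_le {F : Type*} [NormedAddCommGroup F] [NormedSpace ℝ F]
    (f : SchwartzMap ℝ F) (k N : ℕ) :
    ∃ C, 0 ≤ C ∧ ∀ a : ℝ, ‖iteratedDeriv k f a‖ ≤ C * ((1 + |a|) ^ N)⁻¹ := by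
  refine ⟨2 ^ N * (Finset.Iic (N, k)).sup (fun m => SchwartzMap.seminorm ℝ m.1 m.2) f,
    by positivity, fun a => ?_⟩
  have h := SchwartzMap.one_add_le_sup_seminorm_apply (𝕜 := ℝ) (m := (N, k)) le_rfl le_rfl f a
  rw [norm_iteratedFDeriv_eq_norm_iteratedDeriv, Real.norm_eq_abs, mul_comm] at h
  rwa [← div_eq_mul_inv, le_div_iff₀ (by positivity)]

lemma inv_one_add_abs_pow_le_mul {a s y : ℝ} (hy : |y - a| ≤ |s|) (N : ℕ) :
    ((1 + |y|) ^ N)⁻¹ ≤ ((1 + |a|) ^ N)⁻¹ * (1 + |s|) ^ N := by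
  have hbase : 1 + |a| ≤ (1 + |s|) * (1 + |y|) := by
    have := abs_sub_abs_le_abs_sub a y
    rw [abs_sub_comm] at this
    nlinarith [mul_nonneg (abs_nonneg s) (abs_nonneg y)]
  rw [inv_mul_eq_div, ← one_div, div_le_div_iff₀ (by positivity) (by positivity), one_mul,
    ← mul_pow]
  gcongr

lemma schwartz_exists_taylor_remainder_le (f : SchwartzMap ℝ ℝ) (n N : ℕ) :
    ∃ C, 0 ≤ C ∧ ∀ a s : ℝ,
      |f (a + s) - ∑ k ∈ Finset.range (n + 1), iteratedDeriv k f a * (s ^ k / k !)| ≤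
        C * (((1 + |a|) ^ N)⁻¹ * ((1 + |s|) ^ N * |s| ^ (n + 1))) := by
  obtain ⟨C, hC, hdecay⟩ := schwartz_exists_norm_iteratedDeriv_le f (n + 1) N
  refine ⟨C, hC, fun a s => ?_⟩
  obtain ⟨y, hy, hyeq⟩ := exists_mem_uIcc_eq_taylor_sum_add (f.smooth (n + 1)) a s
  have hys : |y - a| ≤ |s| := by simpa using abs_sub_left_of_mem_uIcc hy
  have hfac : (1 : ℝ) ≤ (n + 1)! := by exact_mod_cast (n + 1).factorial_pos
  calc |f (a + s) - ∑ k ∈ Finset.range (n + 1), iteratedDeriv k f a * (s ^ k / k !)|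
      = |iteratedDeriv (n + 1) f y| * (|s| ^ (n + 1) / (n + 1)!) := by
        rw [hyeq, add_sub_cancel_left, abs_mul, abs_div, abs_pow, Nat.abs_cast]
    _ ≤ C * (((1 + |a|) ^ N)⁻¹ * (1 + |s|) ^ N) * |s| ^ (n + 1) := by
        gcongr
        · exact (hdecay y).trans (by gcongr; exact inv_one_add_abs_pow_le_mul hys N)
        · exact div_le_self (by positivity) hfac
    _ = C * (((1 + |a|) ^ N)⁻¹ * ((1 + |s|) ^ N * |s| ^ (n + 1))) := by ring

section MeasureSpace

variable {X : Type*} [MeasurableSpace X] {ν : Measure X} {V : X → ℝ}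

lemma norm_integral_sub_sum_integral_le {F ι : Type*} [NormedAddCommGroup F] [NormedSpace ℝ F]
    {g : X → F} {s : Finset ι} {term : ι → X → F} {majorant : X → ℝ}
    (hg : AEStronglyMeasurable g ν) (hterm : ∀ i ∈ s, Integrable (term i) ν)
    (hmajorant : Integrable majorant ν) (hle : ∀ x, ‖g x - ∑ i ∈ s, term i x‖ ≤ majorant x) :
    ‖∫ x, g x ∂ν - ∑ i ∈ s, ∫ x, term i x ∂ν‖ ≤ ∫ x, majorant x ∂ν := by
  have hsum : Integrable (fun x => ∑ i ∈ s, term i x) ν := integrable_finsetSum s hterm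
  have hremainder : Integrable (fun x => g x - ∑ i ∈ s, term i x) ν :=
    hmajorant.mono' (hg.sub hsum.aestronglyMeasurable) (.of_forall hle)
  have hgint : Integrable g ν :=
    (hremainder.add hsum).congr (.of_forall fun x => sub_add_cancel _ _)
  rw [← integral_finsetSum s hterm, ← integral_sub hgint hsum]
  exact norm_integral_le_of_norm_le hmajorant (.of_forall hle)

lemma integrable_one_add_abs_pow_mul_abs_pow
    (hV : ∀ k : ℕ, 1 ≤ k → Integrable (fun x => V x ^ k) ν) (N : ℕ) {n : ℕ} (hn : 1 ≤ n) :
    Integrable (fun x => (1 + |V x|) ^ N * |V x| ^ n) ν := by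
  have hexpand (x : X) : (1 + |V x|) ^ N * |V x| ^ n =
      ∑ j ∈ Finset.range (N + 1), N.choose j * |V x ^ (j + n)| := by
    rw [add_comm, add_pow, Finset.sum_mul]
    refine Finset.sum_congr rfl fun j _ => ?_
    rw [one_pow, abs_pow, pow_add]
    ring
  simp only [hexpand]
  exact integrable_finsetSum _ fun j _ => (hV (j + n) (by omega)).abs.const_mul _

lemma integral_one_add_abs_smul_pow_mul_le
    (hV : ∀ k : ℕ, 1 ≤ k → Integrable (fun x => V x ^ k) ν) (N : ℕ) {n : ℕ} (hn : 1 ≤ n)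
    {t : ℝ} (ht : |t| ≤ 1) :
    ∫ x, (1 + |(t • V) x|) ^ N * |(t • V) x| ^ n ∂ν ≤
      |t| ^ n * ∫ x, (1 + |V x|) ^ N * |V x| ^ n ∂ν := by
  rw [← integral_const_mul]
  refine integral_mono_of_nonneg (.of_forall fun x => by positivity)
    ((integrable_one_add_abs_pow_mul_abs_pow hV N hn).const_mul _) (.of_forall fun x => ?_)
  have habs : |(t • V) x| = |t| * |V x| := abs_mul t (V x)
  calc (1 + |(t • V) x|) ^ N * |(t • V) x| ^ n
      ≤ (1 + |V x|) ^ N * (|t| * |V x|) ^ n := by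
        rw [habs]
        gcongr
        exact mul_le_of_le_one_left (abs_nonneg _) ht
    _ = |t| ^ n * ((1 + |V x|) ^ N * |V x| ^ n) := by ring

end MeasureSpace

section HaarMeasure

variable {E : Type*} [NormedAddCommGroup E] [NormedSpace ℝ E] [FiniteDimensional ℝ E]
  [MeasurableSpace E] [BorelSpace E] (μ : Measure E) [μ.IsAddHaarMeasure]

lemma integrable_exp_neg_mul_norm_rpow {b p : ℝ} (hb : 0 < b) (hp : 0 < p) :
    Integrable (fun x : E => exp (-b * ‖x‖ ^ p)) μ := by
  cases subsingleton_or_nontrivial E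
  · exact .of_finite
  rw [integrable_fun_norm_addHaar μ (f := fun r => exp (-b * r ^ p))]
  simpa only [rpow_natCast, smul_eq_mul] using
    integrableOn_rpow_mul_exp_neg_mul_rpow (s := (finrank ℝ E - 1 : ℕ))
      (by linarith [(finrank ℝ E - 1).cast_nonneg (α := ℝ)]) hp hb

lemma integrable_pow_of_abs_le_exp_neg_mul_norm_rpow {V : E → ℝ} (hV : AEStronglyMeasurable V μ)
    {A b p : ℝ} (hb : 0 < b) (hp : 0 < p) (hdecay : ∀ x, |V x| ≤ A * exp (-b * ‖x‖ ^ p))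
    {k : ℕ} (hk : 1 ≤ k) : Integrable (fun x => V x ^ k) μ := by
  have hkb : 0 < k * b := by positivity
  refine ((integrable_exp_neg_mul_norm_rpow μ hkb hp).const_mul (A ^ k)).mono' (hV.pow k)
    (.of_forall fun x => ?_)
  calc ‖V x ^ k‖ = |V x| ^ k := by rw [norm_pow, Real.norm_eq_abs]
    _ ≤ (A * exp (-b * ‖x‖ ^ p)) ^ k := by gcongr; exact hdecay x
    _ = A ^ k * exp (-(k * b) * ‖x‖ ^ p) := by
        rw [mul_pow, ← exp_nat_mul]
        ring_nf

lemma integrable_inv_one_add_norm_sq_pow {N : ℕ} (hN : finrank ℝ E < 2 * N) :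
    Integrable (fun x : E => ((1 + ‖x‖ ^ 2) ^ N)⁻¹) μ := by
  refine (integrable_rpow_neg_one_add_norm_sq (μ := μ) (r := 2 * N) (by exact_mod_cast hN)).congr
    (.of_forall fun x => ?_)
  have hnonneg : 0 ≤ 1 + ‖x‖ ^ 2 := by positivity
  simp only [neg_div, mul_div_cancel_left₀ (N : ℝ) two_ne_zero, rpow_neg hnonneg, rpow_natCast]

lemma schwartz_integrable_iteratedDeriv_norm_sq (f : SchwartzMap ℝ ℝ) (k : ℕ) :
    Integrable (fun ξ : E => iteratedDeriv k f (‖ξ‖ ^ 2)) μ := by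
  obtain ⟨C, -, hdecay⟩ := schwartz_exists_norm_iteratedDeriv_le f k (finrank ℝ E + 1)
  have hcont : Continuous (iteratedDeriv k f) := (f.smooth k).continuous_iteratedDeriv k le_rfl
  have hweight := integrable_inv_one_add_norm_sq_pow μ (N := finrank ℝ E + 1) (by omega)
  exact (hweight.const_mul C).mono' (hcont.comp (by fun_prop)).aestronglyMeasurable
    (.of_forall fun ξ => (hdecay _).trans_eq (by rw [abs_sq]))

variable {X : Type*} [MeasurableSpace X] (ν : Measure X) [SFinite ν]

lemma integral_prod_comp_smul_fst {F : Type*} [NormedAddCommGroup F] [NormedSpace ℝ F]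
    (g : E × X → F) {c : ℝ} (hc : c ≠ 0) :
    ∫ p, g (c • p.1, p.2) ∂μ.prod ν = |(c ^ finrank ℝ E)⁻¹| • ∫ p, g p ∂μ.prod ν := by
  let e : E × X ≃ᵐ E × X :=
    (Homeomorph.smulOfNeZero c hc).toMeasurableEquiv.prodCongr (.refl X)
  have hmap : (μ.prod ν).map e = ENNReal.ofReal |(c ^ finrank ℝ E)⁻¹| • μ.prod ν := by
    have h := Measure.map_prod_map μ ν (measurable_const_smul c) measurable_id
    rw [Measure.map_addHaar_smul μ hc, Measure.map_id, Measure.prod_smul_left] at h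
    exact h.symm
  calc ∫ p, g (c • p.1, p.2) ∂μ.prod ν = ∫ p, g p ∂(μ.prod ν).map e := (integral_map_equiv e g).symm
    _ = _ := by rw [hmap, integral_smul_measure, ENNReal.toReal_ofReal (abs_nonneg _)]

/-- The phase space integral `∫∫ (f (‖ξ‖ ^ 2 + V x) - f (‖ξ‖ ^ 2)) dξ dx`, the semiclassical
counterpart of the relative trace `Tr (f (-Δ + V) - f (-Δ))`. Momenta `ξ` range over `(E, μ)` and
positions `x` over an unrelated measure space `(X, ν)`. -/
noncomputable def phaseSpaceTrace (f : ℝ → ℝ) (V : X → ℝ) : ℝ :=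
  ∫ p : E × X, (f (‖p.1‖ ^ 2 + V p.2) - f (‖p.1‖ ^ 2)) ∂μ.prod ν

lemma integral_div_eq_sqrt_pow_mul_phaseSpaceTrace (f : ℝ → ℝ) (V : X → ℝ) {lam : ℝ}
    (hlam : 0 < lam) :
    ∫ p : E × X, (f ((‖p.1‖ ^ 2 + V p.2) / lam) - f (‖p.1‖ ^ 2 / lam)) ∂μ.prod ν =
      √lam ^ finrank ℝ E * phaseSpaceTrace μ ν f (lam⁻¹ • V) := by
  have hsqrt : 0 < √lam := sqrt_pos.2 hlam
  have hscale (ξ : E) : ‖ξ‖ ^ 2 / lam = ‖(√lam)⁻¹ • ξ‖ ^ 2 := by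
    rw [norm_smul, norm_inv, mul_pow, inv_pow, Real.norm_of_nonneg hsqrt.le, sq_sqrt hlam.le,
      inv_mul_eq_div]
  have hpot (x : X) : V x / lam = (lam⁻¹ • V) x := by
    rw [Pi.smul_apply, smul_eq_mul, inv_mul_eq_div]
  simp only [add_div, hscale, hpot]
  rw [integral_prod_comp_smul_fst μ ν
    (fun p : E × X => f (‖p.1‖ ^ 2 + (lam⁻¹ • V) p.2) - f (‖p.1‖ ^ 2)) (inv_ne_zero hsqrt.ne'),
    inv_pow, inv_inv, abs_of_pos (by positivity), smul_eq_mul, phaseSpaceTrace]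

lemma exists_abs_phaseSpaceTrace_sub_sum_le (f : SchwartzMap ℝ ℝ) (n : ℕ) :
    ∃ (C : ℝ) (N : ℕ), 0 ≤ C ∧
      ∀ V : X → ℝ, (∀ k : ℕ, 1 ≤ k → Integrable (fun x => V x ^ k) ν) →
        |phaseSpaceTrace μ ν f V - ∑ k ∈ Finset.Ico 1 (n + 1),
            (∫ ξ, iteratedDeriv k f (‖ξ‖ ^ 2) ∂μ) * ((∫ x, V x ^ k ∂ν) / k !)| ≤
          C * ∫ x, (1 + |V x|) ^ N * |V x| ^ (n + 1) ∂ν := by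
  set N := finrank ℝ E + 1
  obtain ⟨C, hC, htaylor⟩ := schwartz_exists_taylor_remainder_le f n N
  refine ⟨C * ∫ ξ : E, ((1 + ‖ξ‖ ^ 2) ^ N)⁻¹ ∂μ, N,
    mul_nonneg hC (integral_nonneg fun ξ => by positivity), fun V hV => ?_⟩
  have hincrement : AEStronglyMeasurable
      (fun p : E × X => f (‖p.1‖ ^ 2 + V p.2) - f (‖p.1‖ ^ 2)) (μ.prod ν) := by
    have hVmeas : AEStronglyMeasurable V ν := by
      simpa only [pow_one] using (hV 1 le_rfl).aestronglyMeasurable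
    have hkinetic : AEStronglyMeasurable (fun p : E × X => ‖p.1‖ ^ 2) (μ.prod ν) :=
      (continuous_norm.pow 2).aestronglyMeasurable.comp_fst
    exact (f.continuous.comp_aestronglyMeasurable (hkinetic.add hVmeas.comp_snd)).sub
      (f.continuous.comp_aestronglyMeasurable hkinetic)
  have hterm : ∀ k ∈ Finset.Ico 1 (n + 1), Integrable
      (fun p : E × X => iteratedDeriv k f (‖p.1‖ ^ 2) * (V p.2 ^ k / k !)) (μ.prod ν) :=
    fun k hk => (schwartz_integrable_iteratedDeriv_norm_sq μ f k).mul_prod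
      ((hV k (Finset.mem_Ico.1 hk).1).div_const _)
  have hmajorant : Integrable (fun p : E × X => C * (((1 + ‖p.1‖ ^ 2) ^ N)⁻¹ *
      ((1 + |V p.2|) ^ N * |V p.2| ^ (n + 1)))) (μ.prod ν) :=
    ((integrable_inv_one_add_norm_sq_pow μ (by omega)).mul_prod
      (integrable_one_add_abs_pow_mul_abs_pow hV N n.succ_pos)).const_mul C
  have h := norm_integral_sub_sum_integral_le hincrement hterm hmajorant fun p => by
    have hp := htaylor (‖p.1‖ ^ 2) (V p.2)
    rwa [abs_sq, Finset.range_eq_Ico, Finset.sum_eq_sum_Ico_succ_bot n.succ_pos,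
      iteratedDeriv_zero, pow_zero, Nat.factorial_zero, Nat.cast_one, div_one, mul_one,
      ← sub_sub] at hp
  have hterm_integral (k : ℕ) :
      ∫ p : E × X, iteratedDeriv k f (‖p.1‖ ^ 2) * (V p.2 ^ k / k !) ∂μ.prod ν =
        (∫ ξ, iteratedDeriv k f (‖ξ‖ ^ 2) ∂μ) * ((∫ x, V x ^ k ∂ν) / k !) := by
    rw [integral_prod_mul (fun ξ : E => iteratedDeriv k f (‖ξ‖ ^ 2)) (fun x => V x ^ k / k !),
      integral_div]
  rwa [integral_const_mul, integral_prod_mul (fun ξ : E => ((1 + ‖ξ‖ ^ 2) ^ N)⁻¹)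
    (fun x => (1 + |V x|) ^ N * |V x| ^ (n + 1)), ← mul_assoc,
    Finset.sum_congr rfl fun k _ => hterm_integral k] at h

lemma phaseSpaceTrace_smul_sub_sum_isBigO (f : SchwartzMap ℝ ℝ) {V : X → ℝ}
    (hV : ∀ k : ℕ, 1 ≤ k → Integrable (fun x => V x ^ k) ν) (n : ℕ) :
    (fun t : ℝ => phaseSpaceTrace μ ν f (t • V) - ∑ k ∈ Finset.Ico 1 (n + 1),
      (∫ ξ, iteratedDeriv k f (‖ξ‖ ^ 2) ∂μ) * ((∫ x, V x ^ k ∂ν) / k !) * t ^ k)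
      =O[𝓝 0] fun t => t ^ (n + 1) := by
  obtain ⟨C, N, hC, hbound⟩ := exists_abs_phaseSpaceTrace_sub_sum_le μ ν f n
  refine .of_bound (C * ∫ x, (1 + |V x|) ^ N * |V x| ^ (n + 1) ∂ν) ?_
  have hnear : ∀ᶠ t : ℝ in 𝓝 0, |t| ≤ 1 :=
    (continuous_abs.tendsto' 0 0 abs_zero).eventually_le_const one_pos
  filter_upwards [hnear] with t ht
  have hmoment (k : ℕ) : (∫ x, (t • V) x ^ k ∂ν) / k ! = (∫ x, V x ^ k ∂ν) / k ! * t ^ k := by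
    simp only [Pi.smul_apply, smul_eq_mul, mul_pow, integral_const_mul]
    ring
  have htV : ∀ k : ℕ, 1 ≤ k → Integrable (fun x => (t • V) x ^ k) ν := fun k hk => by
    simpa only [Pi.smul_apply, smul_eq_mul, mul_pow] using (hV k hk).const_mul (t ^ k)
  calc _ = |phaseSpaceTrace μ ν f (t • V) - ∑ k ∈ Finset.Ico 1 (n + 1),
          (∫ ξ, iteratedDeriv k f (‖ξ‖ ^ 2) ∂μ) * ((∫ x, (t • V) x ^ k ∂ν) / k !)| := by
        simp only [hmoment, Real.norm_eq_abs, mul_assoc]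
    _ ≤ C * ∫ x, (1 + |(t • V) x|) ^ N * |(t • V) x| ^ (n + 1) ∂ν := hbound _ htV
    _ ≤ C * (|t| ^ (n + 1) * ∫ x, (1 + |V x|) ^ N * |V x| ^ (n + 1) ∂ν) := by
        gcongr
        exact integral_one_add_abs_smul_pow_mul_le hV N n.succ_pos ht
    _ = _ := by rw [norm_pow, Real.norm_eq_abs]; ring

theorem statement13_general (f : SchwartzMap ℝ ℝ) {V V₀ : X → ℝ}
    (hV : ∀ k : ℕ, 1 ≤ k → Integrable (fun x => V x ^ k) ν)
    (hV₀ : ∀ k : ℕ, 1 ≤ k → Integrable (fun x => V₀ x ^ k) ν)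
    (heq : ∀ᶠ lam : ℝ in atTop,
      ∫ p : E × X, (f ((‖p.1‖ ^ 2 + V p.2) / lam) - f (‖p.1‖ ^ 2 / lam)) ∂μ.prod ν =
        ∫ p : E × X, (f ((‖p.1‖ ^ 2 + V₀ p.2) / lam) - f (‖p.1‖ ^ 2 / lam)) ∂μ.prod ν)
    {k : ℕ} (hk : 1 ≤ k) (hf : ∫ ξ, iteratedDeriv k f (‖ξ‖ ^ 2) ∂μ ≠ 0) :
    ∫ x, V x ^ k ∂ν = ∫ x, V₀ x ^ k ∂ν := by
  have hlarge : ∀ᶠ lam : ℝ in atTop,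
      phaseSpaceTrace μ ν f (lam⁻¹ • V) = phaseSpaceTrace μ ν f (lam⁻¹ • V₀) := by
    filter_upwards [heq, eventually_gt_atTop 0] with lam htrace hlam
    rw [integral_div_eq_sqrt_pow_mul_phaseSpaceTrace μ ν f V hlam,
      integral_div_eq_sqrt_pow_mul_phaseSpaceTrace μ ν f V₀ hlam] at htrace
    exact mul_left_cancel₀ (by positivity) htrace
  have hsmall : ∀ᶠ t : ℝ in 𝓝[>] 0,
      phaseSpaceTrace μ ν f (t • V) = phaseSpaceTrace μ ν f (t • V₀) := by
    simpa only [inv_inv] using tendsto_inv_nhdsGT_zero.eventually hlarge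
  let a : ℕ → ℝ := fun j => ∫ ξ, iteratedDeriv j f (‖ξ‖ ^ 2) ∂μ
  have hdiff (n : ℕ) : (fun t : ℝ => ∑ j ∈ Finset.Ico 1 (n + 1),
      (a j * ((∫ x, V x ^ j ∂ν) / j !) - a j * ((∫ x, V₀ x ^ j ∂ν) / j !)) * t ^ j)
        =O[𝓝[>] 0] fun t => t ^ (n + 1) := by
    refine (((phaseSpaceTrace_smul_sub_sum_isBigO μ ν f hV₀ n).sub
      (phaseSpaceTrace_smul_sub_sum_isBigO μ ν f hV n)).mono nhdsWithin_le_nhds).congr'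
        (hsmall.mono fun t ht => ?_) .rfl
    simp only [a, ht, sub_sub_sub_cancel_left, sub_mul, Finset.sum_sub_distrib]
  have hcoeff : a k * ((∫ x, V x ^ k ∂ν) / k !) = a k * ((∫ x, V₀ x ^ k ∂ν) / k !) :=
    sub_eq_zero.1 (coeff_eq_zero_of_sum_isBigO_pow (nhdsGT_le_nhdsNE 0) hdiff hk)
  have hfactorial : (k ! : ℝ) ≠ 0 := by exact_mod_cast k.factorial_ne_zero
  exact (div_left_inj' hfactorial).1 (mul_left_cancel₀ hf hcoeff)

end HaarMeasure

theorem statement13 (n : ℕ) (hn : 1 ≤ n) (f : SchwartzMap ℝ ℝ)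
    (hf : ∀ k : ℕ, n ≤ k →
      (∫ ξ : EuclideanSpace ℝ (Fin n), iteratedDeriv k f (‖ξ‖ ^ 2)) ≠ 0)
    (V V₀ : EuclideanSpace ℝ (Fin n) → ℝ)
    (hVmeas : Measurable V) (hV₀meas : Measurable V₀)
    (hVnn : ∀ x, 0 ≤ V x) (hV₀nn : ∀ x, 0 ≤ V₀ x)
    (hVdec : ∃ ε A B : ℝ, 0 < ε ∧ 0 < A ∧ 0 < B ∧
      ∀ x, V x ≤ A * Real.exp (-B * ‖x‖ ^ (1 + ε)))
    (hV₀dec : ∃ ε A B : ℝ, 0 < ε ∧ 0 < A ∧ 0 < B ∧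
      ∀ x, V₀ x ≤ A * Real.exp (-B * ‖x‖ ^ (1 + ε)))
    (heq : ∀ lam : ℝ, 0 < lam →
      (∫ p : EuclideanSpace ℝ (Fin n) × EuclideanSpace ℝ (Fin n),
          (f ((‖p.1‖ ^ 2 + V p.2) / lam) - f (‖p.1‖ ^ 2 / lam))) =
        ∫ p : EuclideanSpace ℝ (Fin n) × EuclideanSpace ℝ (Fin n),
          (f ((‖p.1‖ ^ 2 + V₀ p.2) / lam) - f (‖p.1‖ ^ 2 / lam))) :
    ∀ k : ℕ, n ≤ k → ∫ x, (V x) ^ k = ∫ x, (V₀ x) ^ k := by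
  obtain ⟨ε, A, B, hε, -, hB, hV⟩ := hVdec
  obtain ⟨ε₀, A₀, B₀, hε₀, -, hB₀, hV₀⟩ := hV₀dec
  have hVint (j : ℕ) : 1 ≤ j → Integrable fun x => V x ^ j :=
    integrable_pow_of_abs_le_exp_neg_mul_norm_rpow volume hVmeas.aestronglyMeasurable hB
      (add_pos one_pos hε) fun x => (abs_of_nonneg (hVnn x)).trans_le (hV x)
  have hV₀int (j : ℕ) : 1 ≤ j → Integrable fun x => V₀ x ^ j :=
    integrable_pow_of_abs_le_exp_neg_mul_norm_rpow volume hV₀meas.aestronglyMeasurable hB₀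
      (add_pos one_pos hε₀) fun x => (abs_of_nonneg (hV₀nn x)).trans_le (hV₀ x)
  exact fun k hk => statement13_general volume volume f hVint hV₀int
    ((eventually_gt_atTop 0).mono heq) (hn.trans hk) (hf k hk)
end

section
/- Let n ≥ 1 and let V, V₀ ∈ C^∞(ℝⁿ; [0,∞)) be bounded functions such that ∫_{ℝⁿ} V^k |∇V|² dx and ∫_{ℝⁿ} V₀^k |∇V₀|² dx are finite and equal for every integer k ≥ n (in particular ∫ |∇V|² dx < ∞ and ∫ |∇V₀|² dx < ∞). Then for every Borel set A ⊆ (0,∞), ∫_{V^{−1}(A)} |∇V(x)|² dx = ∫_{V₀^{−1}(A)} |∇V₀(x)|² dx. -/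
open MeasureTheory Real

/-!
Let `ρ` and `ρ₀` be the pushforwards under `V` and `V₀` of the measures with densities `‖∇V‖²` and
`‖∇V₀‖²`. By hypothesis their moments of order `k ≥ n` agree. Multiplying both by an even power
`t ^ m` with `m ≥ n`, which is nonnegative and vanishes only at `0`, gives two measures all of whose
moments agree. These have exponential moments, so their moment generating functions extend
holomorphically to a vertical strip around the imaginary axis, with derivatives at `0` given by the
moments. By the identity theorem the extensions agree, in particular on the imaginary axis, so the
two measures have the same characteristic function and are equal. Dividing by `t ^ m` shows
`ρ = ρ₀` away from `0`.
-/

open ProbabilityTheory Filter Topology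

theorem eventuallyEq_of_iteratedDeriv_eq {𝕜 : Type*} [NontriviallyNormedField 𝕜] [CompleteSpace 𝕜]
    [CharZero 𝕜] {f g : 𝕜 → 𝕜} {x : 𝕜} (hf : AnalyticAt 𝕜 f x) (hg : AnalyticAt 𝕜 g x)
    (h : ∀ k, iteratedDeriv k f x = iteratedDeriv k g x) : f =ᶠ[𝓝 x] g := by
  have hfg := hf.hasFPowerSeriesAt.sub hg.hasFPowerSeriesAt
  simp only [h, sub_self] at hfg
  exact hfg.eventually_eq_zero.mono fun _ hz => sub_eq_zero.1 hz

section MomentProblem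

variable {Ω Ω' : Type*} [MeasurableSpace Ω] [MeasurableSpace Ω'] {μ : Measure Ω} {ν : Measure Ω'}
  {X : Ω → ℝ} {Y : Ω' → ℝ}

theorem iteratedDeriv_complexMGF_zero (hX : 0 ∈ interior (integrableExpSet X μ)) (k : ℕ) :
    iteratedDeriv k (complexMGF X μ) 0 = moment X k μ := by
  rw [iteratedDeriv_complexMGF (by simpa using hX)]
  simp [moment_def, ← integral_complex_ofReal]

theorem eqOn_complexMGF_of_moment_eq (hX : 0 ∈ interior (integrableExpSet X μ))
    (hY : 0 ∈ interior (integrableExpSet Y ν)) (h : ∀ k, moment X k μ = moment Y k ν) :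
    Set.EqOn (complexMGF X μ) (complexMGF Y ν)
      {z | z.re ∈ interior (integrableExpSet X μ) ∩ interior (integrableExpSet Y ν)} := by
  have strip_preconnected : IsPreconnected
      {z : ℂ | z.re ∈ interior (integrableExpSet X μ) ∩ interior (integrableExpSet Y ν)} :=
    ((convex_integrableExpSet.interior.inter convex_integrableExpSet.interior).linear_preimage
      Complex.reLm).isPreconnected
  have eventuallyEq_zero : complexMGF X μ =ᶠ[𝓝 0] complexMGF Y ν :=
    eventuallyEq_of_iteratedDeriv_eq (analyticAt_complexMGF (by simpa using hX))
      (analyticAt_complexMGF (by simpa using hY)) fun k => by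
        rw [iteratedDeriv_complexMGF_zero hX, iteratedDeriv_complexMGF_zero hY, h]
  exact (analyticOnNhd_complexMGF.mono fun _ hz => hz.1).eqOn_of_preconnected_of_eventuallyEq
    (analyticOnNhd_complexMGF.mono fun _ hz => hz.2) strip_preconnected
    (by simpa using ⟨hX, hY⟩) eventuallyEq_zero

theorem isFiniteMeasure_of_zero_mem_integrableExpSet (hX : 0 ∈ integrableExpSet X μ) :
    IsFiniteMeasure μ := by
  simpa [integrableExpSet, integrable_const_iff] using hX

theorem measure_eq_of_moment_eq {ρ σ : Measure ℝ} (hρ : 0 ∈ interior (integrableExpSet id ρ))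
    (hσ : 0 ∈ interior (integrableExpSet id σ)) (h : ∀ k, moment id k ρ = moment id k σ) :
    ρ = σ := by
  have := isFiniteMeasure_of_zero_mem_integrableExpSet (interior_subset hρ)
  have := isFiniteMeasure_of_zero_mem_integrableExpSet (interior_subset hσ)
  refine Measure.ext_of_charFun (funext fun t => ?_)
  rw [← complexMGF_id_mul_I, ← complexMGF_id_mul_I]
  exact eqOn_complexMGF_of_moment_eq hρ hσ h (by simpa using ⟨hρ, hσ⟩)

theorem zero_mem_interior_integrableExpSet {ε : ℝ} (hε : 0 < ε) (hX : AEMeasurable X μ)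
    (hexp : Integrable (fun ω => exp (ε * |X ω|)) μ) :
    0 ∈ interior (integrableExpSet X μ) := by
  have Ioo_subset : Set.Ioo (-ε) ε ⊆ integrableExpSet X μ := fun t ht => by
    refine hexp.mono' (by fun_prop) (.of_forall fun ω => ?_)
    rw [norm_of_nonneg (exp_nonneg _), exp_le_exp]
    calc t * X ω ≤ |t| * |X ω| := (le_abs_self _).trans_eq (abs_mul _ _)
      _ ≤ ε * |X ω| := by gcongr; exact (abs_lt.2 ht).le
  exact interior_maximal Ioo_subset isOpen_Ioo (by simpa using hε)

end MomentProblem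

section EvenPowerDensity

variable {Ω : Type*} [MeasurableSpace Ω] {μ : Measure Ω} {X : Ω → ℝ} {m : ℕ}

theorem interior_integrableExpSet_subset_withDensity_pow (hm : Even m) :
    interior (integrableExpSet X μ) ⊆
      interior (integrableExpSet X (μ.withDensity fun ω => ENNReal.ofReal (X ω ^ m))) := by
  refine interior_maximal (fun t ht => ?_) isOpen_interior
  have hX := aemeasurable_of_mem_interior_integrableExpSet ht
  refine (integrable_withDensity_iff_integrable_smul₀' (by fun_prop) (by simp)).2 ?_
  simpa only [ENNReal.toReal_ofReal (hm.pow_nonneg _), smul_eq_mul] using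
    integrable_pow_mul_exp_of_mem_interior_integrableExpSet ht m

theorem moment_withDensity_pow (hX : AEMeasurable X μ) (hm : Even m) (k : ℕ) :
    moment X k (μ.withDensity fun ω => ENNReal.ofReal (X ω ^ m)) = moment X (m + k) μ := by
  rw [moment_def, moment_def, integral_withDensity_eq_integral_toReal_smul₀ (by fun_prop) (by simp)]
  simp only [ENNReal.toReal_ofReal (hm.pow_nonneg _), Pi.pow_apply, smul_eq_mul, pow_add]

end EvenPowerDensity

theorem restrict_support_eq_of_withDensity_eq {α : Type*} [MeasurableSpace α] {μ ν : Measure α}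
    {f : α → ENNReal} (hf : Measurable f) (hf_top : ∀ x, f x ≠ ⊤)
    (h : μ.withDensity f = ν.withDensity f) :
    μ.restrict f.support = ν.restrict f.support := by
  have withDensity_inv (κ : Measure α) :
      ((κ.withDensity f).restrict f.support).withDensity (fun x => (f x)⁻¹) =
        κ.restrict f.support := by
    rw [restrict_withDensity (measurableSet_support hf)]
    exact withDensity_inv_same hf (ae_restrict_mem (measurableSet_support hf)) (.of_forall hf_top)
  rw [← withDensity_inv μ, h, withDensity_inv ν]

theorem restrict_compl_zero_eq_of_moment_eq {ρ σ : Measure ℝ}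
    (hρ : 0 ∈ interior (integrableExpSet id ρ)) (hσ : 0 ∈ interior (integrableExpSet id σ))
    {n : ℕ} (h : ∀ k, n ≤ k → moment id k ρ = moment id k σ) :
    ρ.restrict {0}ᶜ = σ.restrict {0}ᶜ := by
  -- An even exponent makes the density nonnegative on the whole line; `n + 1` instead of `n` makes
  -- the density vanish at `0` also when `n = 0`.
  let f : ℝ → ENNReal := fun t => ENNReal.ofReal (t ^ (2 * (n + 1)))
  have even_exponent : Even (2 * (n + 1)) := even_two_mul _
  have support_f : f.support = {0}ᶜ := by
    ext t
    simp [f, even_exponent.pow_pos_iff]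
  have withDensity_eq : ρ.withDensity f = σ.withDensity f :=
    measure_eq_of_moment_eq (interior_integrableExpSet_subset_withDensity_pow even_exponent hρ)
      (interior_integrableExpSet_subset_withDensity_pow even_exponent hσ) fun k =>
        calc moment id k (ρ.withDensity f)
          _ = moment id (2 * (n + 1) + k) ρ :=
            moment_withDensity_pow aemeasurable_id even_exponent k
          _ = moment id (2 * (n + 1) + k) σ := h _ (by lia)
          _ = moment id k (σ.withDensity f) :=
            (moment_withDensity_pow aemeasurable_id even_exponent k).symm
  rw [← support_f]
  exact restrict_support_eq_of_withDensity_eq (by fun_prop) (fun _ => ENNReal.ofReal_ne_top)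
    withDensity_eq

section WeightedMap

variable {Ω : Type*} [MeasurableSpace Ω]

/-- The pushforward under `V` of the measure with density `w` with respect to `μ`; it turns
integrals of `V ^ k * w` into moments of a measure on `ℝ`. The negative part of `w` is discarded. -/
noncomputable def weightedMap (μ : Measure Ω) (V w : Ω → ℝ) : Measure ℝ :=
  (μ.withDensity fun x => ENNReal.ofReal (w x)).map V

variable {μ : Measure Ω} {V w : Ω → ℝ}

theorem integral_weightedMap (hV : Measurable V) (hw : AEMeasurable w μ) (hw_nonneg : 0 ≤ᵐ[μ] w)
    {g : ℝ → ℝ} (hg : Measurable g) :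
    ∫ t, g t ∂weightedMap μ V w = ∫ x, g (V x) * w x ∂μ := by
  rw [weightedMap, integral_map hV.aemeasurable hg.aestronglyMeasurable,
    integral_withDensity_eq_integral_toReal_smul₀ (by fun_prop) (by simp)]
  refine integral_congr_ae ?_
  filter_upwards [hw_nonneg] with x hx
  rw [ENNReal.toReal_ofReal hx, smul_eq_mul, mul_comm]

theorem integrable_weightedMap_iff (hV : Measurable V) (hw : AEMeasurable w μ)
    (hw_nonneg : 0 ≤ᵐ[μ] w) {g : ℝ → ℝ} (hg : Measurable g) :
    Integrable g (weightedMap μ V w) ↔ Integrable (fun x => g (V x) * w x) μ := by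
  rw [weightedMap, integrable_map_measure hg.aestronglyMeasurable hV.aemeasurable,
    integrable_withDensity_iff_integrable_smul₀' (by fun_prop) (by simp)]
  refine integrable_congr ?_
  filter_upwards [hw_nonneg] with x hx
  rw [ENNReal.toReal_ofReal hx, smul_eq_mul, mul_comm, Function.comp_apply]

theorem moment_id_weightedMap (hV : Measurable V) (hw : AEMeasurable w μ)
    (hw_nonneg : 0 ≤ᵐ[μ] w) (k : ℕ) :
    moment id k (weightedMap μ V w) = ∫ x, V x ^ k * w x ∂μ :=
  integral_weightedMap hV hw hw_nonneg (measurable_id.pow_const k)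

theorem measureReal_weightedMap (hV : Measurable V) (hw : AEMeasurable w μ)
    (hw_nonneg : 0 ≤ᵐ[μ] w) {A : Set ℝ} (hA : MeasurableSet A) :
    (weightedMap μ V w).real A = ∫ x in V ⁻¹' A, w x ∂μ := by
  rw [weightedMap, measureReal_def, Measure.map_apply hV hA, withDensity_apply _ (hV hA),
    integral_eq_lintegral_of_nonneg_ae (ae_restrict_of_ae hw_nonneg)
      hw.restrict.aestronglyMeasurable]

theorem zero_mem_interior_integrableExpSet_weightedMap {ε : ℝ} (hε : 0 < ε) (hV : Measurable V)
    (hw : AEMeasurable w μ) (hw_nonneg : 0 ≤ᵐ[μ] w)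
    (hexp : Integrable (fun x => exp (ε * |V x|) * w x) μ) :
    0 ∈ interior (integrableExpSet id (weightedMap μ V w)) :=
  zero_mem_interior_integrableExpSet hε aemeasurable_id <|
    (integrable_weightedMap_iff hV hw hw_nonneg (by fun_prop)).2 hexp

theorem integrable_exp_abs_mul_of_bounded {ε : ℝ} (hε : 0 ≤ ε) (hV : Measurable V)
    (hV_bdd : ∃ M, ∀ x, |V x| ≤ M) (hw : Integrable w μ) :
    Integrable (fun x => exp (ε * |V x|) * w x) μ := by
  obtain ⟨M, hM⟩ := hV_bdd
  refine hw.bdd_mul (c := exp (ε * M)) (by fun_prop) (.of_forall fun x => ?_)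
  rw [norm_of_nonneg (exp_nonneg _), exp_le_exp]
  exact mul_le_mul_of_nonneg_left (hM x) hε

end WeightedMap

theorem statement14_general {Ω Ω' : Type*} [MeasurableSpace Ω] [MeasurableSpace Ω']
    {μ : Measure Ω} {ν : Measure Ω'} {V w : Ω → ℝ} {V₀ w₀ : Ω' → ℝ}
    (hV : Measurable V) (hV₀ : Measurable V₀)
    (hw : AEMeasurable w μ) (hw₀ : AEMeasurable w₀ ν)
    (hw_nonneg : 0 ≤ᵐ[μ] w) (hw₀_nonneg : 0 ≤ᵐ[ν] w₀) {ε : ℝ} (hε : 0 < ε)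
    (hexp : Integrable (fun x => exp (ε * |V x|) * w x) μ)
    (hexp₀ : Integrable (fun x => exp (ε * |V₀ x|) * w₀ x) ν)
    {n : ℕ} (hmoment : ∀ k, n ≤ k → ∫ x, V x ^ k * w x ∂μ = ∫ x, V₀ x ^ k * w₀ x ∂ν)
    {A : Set ℝ} (hA0 : 0 ∉ A) (hA : MeasurableSet A) :
    ∫ x in V ⁻¹' A, w x ∂μ = ∫ x in V₀ ⁻¹' A, w₀ x ∂ν := by
  have restrict_eq :
      (weightedMap μ V w).restrict {0}ᶜ = (weightedMap ν V₀ w₀).restrict {0}ᶜ :=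
    restrict_compl_zero_eq_of_moment_eq
      (zero_mem_interior_integrableExpSet_weightedMap hε hV hw hw_nonneg hexp)
      (zero_mem_interior_integrableExpSet_weightedMap hε hV₀ hw₀ hw₀_nonneg hexp₀) fun k hk => by
        simpa only [moment_id_weightedMap hV hw hw_nonneg,
          moment_id_weightedMap hV₀ hw₀ hw₀_nonneg] using hmoment k hk
  have hA_compl : A ⊆ {0}ᶜ := Set.subset_compl_singleton_iff.2 hA0
  rw [← measureReal_weightedMap hV hw hw_nonneg hA, ← measureReal_weightedMap hV₀ hw₀ hw₀_nonneg hA,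
    measureReal_def, measureReal_def, ← Measure.restrict_eq_self _ hA_compl, restrict_eq,
    Measure.restrict_eq_self _ hA_compl]

theorem statement14 (n : ℕ) (hn : 1 ≤ n)
    (V V₀ : EuclideanSpace ℝ (Fin n) → ℝ)
    (hV : ContDiff ℝ (⊤ : ℕ∞) V) (hV₀ : ContDiff ℝ (⊤ : ℕ∞) V₀)
    (hVnn : ∀ x, 0 ≤ V x) (hV₀nn : ∀ x, 0 ≤ V₀ x)
    (hVbd : ∃ M : ℝ, ∀ x, V x ≤ M) (hV₀bd : ∃ M : ℝ, ∀ x, V₀ x ≤ M)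
    (hgradV : Integrable (fun x => ‖gradient V x‖ ^ 2))
    (hgradV₀ : Integrable (fun x => ‖gradient V₀ x‖ ^ 2))
    (hint : ∀ k : ℕ, n ≤ k →
      Integrable (fun x => (V x) ^ k * ‖gradient V x‖ ^ 2) ∧
      Integrable (fun x => (V₀ x) ^ k * ‖gradient V₀ x‖ ^ 2) ∧
      (∫ x, (V x) ^ k * ‖gradient V x‖ ^ 2) =
        ∫ x, (V₀ x) ^ k * ‖gradient V₀ x‖ ^ 2) :
    ∀ A : Set ℝ, A ⊆ Set.Ioi (0 : ℝ) → MeasurableSet A →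
      (∫ x in V ⁻¹' A, ‖gradient V x‖ ^ 2) =
        ∫ x in V₀ ⁻¹' A, ‖gradient V₀ x‖ ^ 2 := by
  intro A hA hAm
  have hV_bdd := hVbd.imp fun _ hM x => (abs_of_nonneg (hVnn x)).trans_le (hM x)
  have hV₀_bdd := hV₀bd.imp fun _ hM x => (abs_of_nonneg (hV₀nn x)).trans_le (hM x)
  exact statement14_general hV.continuous.measurable hV₀.continuous.measurable
    hgradV.aemeasurable hgradV₀.aemeasurable
    (.of_forall fun _ => sq_nonneg _) (.of_forall fun _ => sq_nonneg _) one_pos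
    (integrable_exp_abs_mul_of_bounded zero_le_one hV.continuous.measurable hV_bdd hgradV)
    (integrable_exp_abs_mul_of_bounded zero_le_one hV₀.continuous.measurable hV₀_bdd hgradV₀)
    (fun k hk => (hint k hk).2.2) (Set.notMem_subset hA Set.self_notMem_Ioi) hAm
end

section
/- Let n ≥ 1, let R: [0,∞) → [0,∞) be smooth, not identically 0, with R(r) ≤ A exp(−B r^{1+ε}) for some ε, A, B > 0, and suppose R′(r) vanishes only at r = 0 and at those r with R(r) = 0. Set V₀(x) = R(|x|) and let r₀ = sup{r : R(r) > 0} ∈ (0, ∞]. Let V ∈ C^∞(ℝⁿ; [0,∞)) satisfy V(x) ≤ A′ exp(−B′|x|^{1+ε′}) for some ε′, A′, B′ > 0, and suppose: (i) vol({V > s}) = vol({V₀ > s}) for every s > 0; (ii) for every s ∈ (0, R(0)), the level set {x : V(x) = s} is a Euclidean (n−1)-sphere; and (iii) |∇V(x)| = |R′(R^{−1}(V(x)))| for every x with 0 < V(x) < R(0), where R^{−1}: (0, R(0)) → (0, r₀) is the inverse of the restriction of R to (0, r₀). Then there exists x₀ ∈ ℝⁿ such that V(x) = V₀(x − x₀)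 for all x ∈ ℝⁿ. -/
open MeasureTheory Real

/-!
Since `R` has no critical point where it is positive and tends to zero, it is strictly decreasing
until it vanishes. A point above the level `s` lies inside the sphere `{V = s}`, for otherwise `V`
would take the value `s` again further out on the ray through it, where it decays to zero. Hence
`{V > s}` is the enclosed ball, and comparing volumes shows that its radius is `R⁻¹(s)`.

The balls are concentric because `ρ = R⁻¹ ∘ V` satisfies `|∇ρ| ≤ 1` and equals its radius on each
of these spheres: if the centres of two nested spheres were distinct, then along the line joining
them `ρ` would have to increase by the difference of the radii over a strictly shorter segment.
-/

open Set Filter Topology Metric Bornology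

theorem tendsto_zero_of_le_mul_exp_neg_rpow {α : Type*} {l : Filter α} {f g : α → ℝ} {ε A B : ℝ}
    (hε : 0 < ε) (hB : 0 < B) (hg : Tendsto g l atTop) (hf : ∀ᶠ x in l, 0 ≤ f x)
    (hfg : ∀ᶠ x in l, f x ≤ A * exp (-B * g x ^ (1 + ε))) : Tendsto f l (𝓝 0) := by
  have hexponent : Tendsto (fun x => -B * g x ^ (1 + ε)) l atBot :=
    ((tendsto_rpow_atTop (by linarith : 0 < 1 + ε)).comp hg).const_mul_atTop_of_neg (by linarith)
  exact squeeze_zero' hf hfg (by simpa using (tendsto_exp_atBot.comp hexponent).const_mul A)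

theorem norm_gradient_eq_norm_fderiv {F : Type*} [NormedAddCommGroup F] [InnerProductSpace ℝ F]
    [CompleteSpace F] (f : F → ℝ) (x : F) : ‖gradient f x‖ = ‖fderiv ℝ f x‖ :=
  LinearIsometryEquiv.norm_map _ _

/-- The profile `R` of a radial function `x ↦ R ‖x‖` decaying to zero, without critical points
where it is positive except possibly at the origin. The values of `R` on `(-∞, 0)` are
irrelevant. -/
structure IsRadialProfile (R : ℝ → ℝ) : Prop where
  continuousOn : ContinuousOn R (Ici 0)
  nonneg : ∀ r, 0 ≤ r → 0 ≤ R r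
  exists_ne_zero : ∃ r, 0 ≤ r ∧ R r ≠ 0
  tendsto_zero : Tendsto R atTop (𝓝 0)
  apply_eq_zero_of_deriv_eq_zero : ∀ r, 0 < r → deriv R r = 0 → R r = 0

/-- The inverse `R⁻¹ : (0, R 0) → (0, r₀)` of a radial profile, where `(0, r₀)` is the set of
positive radii at which `R` is positive. Its values outside `(0, R 0)` are junk. -/
noncomputable def profileInv (R : ℝ → ℝ) : ℝ → ℝ :=
  Function.invFunOn R {r | 0 < r ∧ 0 < R r}

namespace IsRadialProfile

variable {R : ℝ → ℝ} {a r s : ℝ}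

theorem apply_le_apply_of_lt (hR : IsRadialProfile R) (ha : 0 ≤ a) (har : a < r) (hr : 0 < R r) :
    R r ≤ R a := by
  by_contra! hlt
  obtain ⟨b, hrb, hb⟩ :=
    ((eventually_gt_atTop r).and (hR.tendsto_zero.eventually_lt_const hr)).exists
  have hends : ∀ z ∈ Icc a b \ Ioo a b, R z < R r := by
    rw [Icc_sdiff_Ioo_same (har.trans hrb).le]
    rintro z (rfl | rfl)
    exacts [hlt, hb]
  obtain ⟨k, hk, hkmax⟩ := isCompact_Icc.exists_isMaxOn_mem_subset
    (hR.continuousOn.mono fun x hx => ha.trans hx.1) (Ioo_subset_Icc_self ⟨har, hrb⟩) hends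
  have hderiv : deriv R k = 0 := (hkmax.isLocalMax (Icc_mem_nhds hk.1 hk.2)).deriv_eq_zero
  have hRk : R k = 0 := hR.apply_eq_zero_of_deriv_eq_zero k (ha.trans_lt hk.1) hderiv
  exact (hr.trans_le (hkmax ⟨har.le, hrb.le⟩)).ne' hRk

theorem apply_lt_apply_of_lt (hR : IsRadialProfile R) (ha : 0 ≤ a) (har : a < r) (hr : 0 < R r) :
    R r < R a := by
  refine (hR.apply_le_apply_of_lt ha har hr).lt_of_ne fun heq => ?_
  obtain ⟨k, hk, hderiv⟩ := exists_deriv_eq_zero har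
    (hR.continuousOn.mono fun x hx => ha.trans hx.1) heq.symm
  have hk0 : 0 < k := ha.trans_lt hk.1
  exact (hr.trans_le (hR.apply_le_apply_of_lt hk0.le hk.2 hr)).ne'
    (hR.apply_eq_zero_of_deriv_eq_zero k hk0 hderiv)

theorem apply_zero_pos (hR : IsRadialProfile R) : 0 < R 0 := by
  obtain ⟨r, hr, hne⟩ := hR.exists_ne_zero
  have hpos : 0 < R r := (hR.nonneg r hr).lt_of_ne' hne
  rcases hr.eq_or_lt with rfl | hr
  · exact hpos
  · exact hpos.trans (hR.apply_lt_apply_of_lt le_rfl hr hpos)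

theorem apply_mem_Ioo (hR : IsRadialProfile R) (hr : 0 < r) (hRr : 0 < R r) :
    R r ∈ Ioo 0 (R 0) :=
  ⟨hRr, hR.apply_lt_apply_of_lt le_rfl hr hRr⟩

theorem apply_lt_apply_iff (hR : IsRadialProfile R) (ha : 0 ≤ a) (hr : 0 < r) (hRr : 0 < R r) :
    R r < R a ↔ a < r := by
  refine ⟨fun h => ?_, fun h => hR.apply_lt_apply_of_lt ha h hRr⟩
  by_contra! hra
  rcases hra.eq_or_lt with rfl | hra
  · exact h.false
  · exact (h.trans (hR.apply_lt_apply_of_lt hr.le hra (hRr.trans h))).false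

theorem exists_pos_apply_eq (hR : IsRadialProfile R) (hs : s ∈ Ioo 0 (R 0)) :
    ∃ r, 0 < r ∧ R r = s := by
  obtain ⟨r, hr, rfl⟩ := isPreconnected_Ici.intermediate_value_Ioc self_mem_Ici
    (le_principal_iff.2 (Ici_mem_atTop 0)) hR.continuousOn hR.tendsto_zero (Ioo_subset_Ioc_self hs)
  exact ⟨r, (mem_Ici.1 hr).lt_of_ne fun h => hs.2.ne (by rw [h]), rfl⟩

theorem injOn (hR : IsRadialProfile R) : InjOn R {r | 0 < r ∧ 0 < R r} :=
  StrictAntiOn.injOn fun _ ha _ hr har => hR.apply_lt_apply_of_lt ha.1.le har hr.2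

theorem profileInv_apply (hR : IsRadialProfile R) (hr : 0 < r) (hRr : 0 < R r) :
    profileInv R (R r) = r :=
  hR.injOn.leftInvOn_invFunOn ⟨hr, hRr⟩

theorem apply_profileInv (hR : IsRadialProfile R) (hs : s ∈ Ioo 0 (R 0)) :
    R (profileInv R s) = s := by
  obtain ⟨r, hr, rfl⟩ := hR.exists_pos_apply_eq hs
  rw [hR.profileInv_apply hr hs.1]

theorem strictAntiOn_profileInv (hR : IsRadialProfile R) :
    StrictAntiOn (profileInv R) (Ioo 0 (R 0)) := by
  intro s hs t ht hst
  obtain ⟨a, ha, rfl⟩ := hR.exists_pos_apply_eq hs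
  obtain ⟨b, hb, rfl⟩ := hR.exists_pos_apply_eq ht
  rw [hR.profileInv_apply ha hs.1, hR.profileInv_apply hb ht.1]
  exact (hR.apply_lt_apply_iff hb.le ha hs.1).1 hst

theorem continuousAt_profileInv (hR : IsRadialProfile R) (hr : 0 < r) (hRr : 0 < R r) :
    ContinuousAt (profileInv R) (R r) := by
  have himage : profileInv R '' Ioo 0 (R 0) ∈ 𝓝 (profileInv R (R r)) := by
    rw [hR.profileInv_apply hr hRr]
    filter_upwards [lt_mem_nhds hr,
      (hR.continuousOn.continuousAt (Ici_mem_nhds hr)).eventually_const_lt hRr] with t ht hRt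
    exact ⟨R t, hR.apply_mem_Ioo ht hRt, hR.profileInv_apply ht hRt⟩
  exact hR.strictAntiOn_profileInv.dual_right.continuousAt_of_image_mem_nhds
    (isOpen_Ioo.mem_nhds (hR.apply_mem_Ioo hr hRr)) himage

theorem deriv_ne_zero (hR : IsRadialProfile R) (hr : 0 < r) (hRr : 0 < R r) : deriv R r ≠ 0 :=
  fun h => hRr.ne' (hR.apply_eq_zero_of_deriv_eq_zero r hr h)

theorem hasDerivAt_profileInv (hR : IsRadialProfile R) (hr : 0 < r) (hRr : 0 < R r) :
    HasDerivAt (profileInv R) (deriv R r)⁻¹ (R r) := by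
  have hne : deriv R r ≠ 0 := hR.deriv_ne_zero hr hRr
  have hderiv : HasDerivAt R (deriv R r) (profileInv R (R r)) := by
    rw [hR.profileInv_apply hr hRr]
    exact (differentiableAt_of_deriv_ne_zero hne).hasDerivAt
  refine HasDerivAt.of_local_left_inverse (hR.continuousAt_profileInv hr hRr) hderiv hne ?_
  filter_upwards [isOpen_Ioo.mem_nhds (hR.apply_mem_Ioo hr hRr)] with s hs
    using hR.apply_profileInv hs

end IsRadialProfile

section LevelSphere

/-- The function `V` equals `s` on the sphere of centre `c` and radius `r`, exceeds `s` inside it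
and is below `s` outside. -/
structure HasLevelSphere {E : Type*} [PseudoMetricSpace E] (V : E → ℝ) (s : ℝ) (c : E) (r : ℝ) :
    Prop where
  lt_iff : ∀ x, s < V x ↔ dist x c < r
  eq_iff : ∀ x, V x = s ↔ dist x c = r

theorem HasLevelSphere.le_iff {E : Type*} [PseudoMetricSpace E] {V : E → ℝ} {s r : ℝ} {c : E}
    (h : HasLevelSphere V s c r) (x : E) : s ≤ V x ↔ dist x c ≤ r := by
  rw [le_iff_lt_or_eq, le_iff_lt_or_eq, h.lt_iff, eq_comm, h.eq_iff]

variable {E : Type*} [NormedAddCommGroup E] [NormedSpace ℝ E] {V : E → ℝ} {s r : ℝ} {c : E}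

theorem tendsto_smul_atTop_cobounded {v : E} (hv : v ≠ 0) :
    Tendsto (fun t : ℝ => t • v) atTop (cobounded E) := by
  rw [← tendsto_norm_atTop_iff_cobounded]
  simp only [norm_smul]
  exact tendsto_norm_atTop_atTop.atTop_mul_const (norm_pos_iff.2 hv)

theorem dist_lt_of_level_eq_sphere (hV : Continuous V) (hlim : Tendsto V (cobounded E) (𝓝 0))
    (hs : 0 < s) (hr : 0 < r) (hlevel : ∀ x, V x = s ↔ dist x c = r) {x : E} (hx : s < V x) :
    dist x c < r := by
  by_contra! hle
  have hlt : r < dist x c := hle.lt_of_ne fun h => hx.ne' ((hlevel x).2 h.symm)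
  have hray : Tendsto (fun t : ℝ => V (c + t • (x - c))) atTop (𝓝 0) :=
    hlim.comp ((tendsto_const_add_cobounded c).comp
      (tendsto_smul_atTop_cobounded (sub_ne_zero.2 (dist_pos.1 (hr.trans hlt)))))
  obtain ⟨t, ht, hts⟩ := isPreconnected_Ici.intermediate_value_Ioc self_mem_Ici
    (le_principal_iff.2 (Ici_mem_atTop (1 : ℝ))) (by fun_prop) hray ⟨hs, by simpa using hx.le⟩
  rw [mem_Ici] at ht
  have hdist : t * dist x c = r := by
    simpa [dist_eq_norm, norm_smul, abs_of_nonneg (zero_le_one.trans ht)] using (hlevel _).1 hts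
  nlinarith

theorem HasLevelSphere.of_level_eq_sphere (hV : Continuous V)
    (hlim : Tendsto V (cobounded E) (𝓝 0)) (hs : 0 < s) (hr : 0 < r)
    (hlevel : {x | V x = s} = sphere c r) (hne : {x | s < V x}.Nonempty) :
    HasLevelSphere V s c r := by
  have hlevel' : ∀ x, V x = s ↔ dist x c = r := Set.ext_iff.1 hlevel
  have hlt : ∀ x, s < V x → dist x c < r := fun x =>
    dist_lt_of_level_eq_sphere hV hlim hs hr hlevel'
  refine ⟨fun x => ⟨hlt x, fun hx => ?_⟩, hlevel'⟩
  by_contra! hxs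
  obtain ⟨y, hy⟩ := hne
  obtain ⟨z, hz, hzs⟩ := (convex_ball c r).isPreconnected.intermediate_value
    (mem_ball.2 hx) (mem_ball.2 (hlt y hy)) hV.continuousOn ⟨hxs, le_of_lt hy⟩
  exact (mem_ball.1 hz).ne ((hlevel' z).1 hzs)

end LevelSphere

section Concentric

variable {E : Type*} [NormedAddCommGroup E] [NormedSpace ℝ E] {c c' : E} {r r' : ℝ}

theorem exists_isometry_affineMap_of_ne (h : c ≠ c') :
    ∃ γ : ℝ →ᵃ[ℝ] E, Isometry γ ∧ γ 0 = c ∧ γ (-dist c c') = c' := by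
  have hd : ‖c - c'‖ ≠ 0 := norm_ne_zero_iff.2 (sub_ne_zero.2 h)
  set e : E := ‖c - c'‖⁻¹ • (c - c') with he
  have hnorm : ‖e‖ = 1 := by
    rw [he, norm_smul, norm_inv, norm_norm, inv_mul_cancel₀ hd]
  refine ⟨AffineMap.lineMap c (c + e), Isometry.of_dist_eq fun u v => ?_, by simp, ?_⟩
  · simp [hnorm]
  · rw [dist_eq_norm, AffineMap.lineMap_apply, vadd_eq_add, vsub_eq_sub, add_sub_cancel_left,
      neg_smul, he, smul_inv_smul₀ hd]
    abel

theorem center_eq_of_norm_fderiv_le_one {f : E → ℝ} (hr : 0 ≤ r)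
    (hsub : closedBall c r ⊆ closedBall c' r')
    (hf : ∀ x ∈ closedBall c' r' \ ball c r, DifferentiableAt ℝ f x)
    (hf' : ∀ x ∈ closedBall c' r' \ ball c r, ‖fderiv ℝ f x‖ ≤ 1)
    (hinner : ∀ x ∈ sphere c r, f x = r) (houter : ∀ x ∈ sphere c' r', f x = r') :
    c = c' := by
  by_contra hcc
  have hd : 0 < dist c c' := dist_pos.2 hcc
  obtain ⟨γ, hγ, hγc, hγc'⟩ := exists_isometry_affineMap_of_ne hcc
  set d := dist c c'
  have hdist : ∀ u, 0 ≤ u → dist (γ u) c = u := fun u hu => by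
    rw [← hγc, hγ.dist_eq, dist_zero_right, norm_of_nonneg hu]
  have hdist' : ∀ u, 0 ≤ u → dist (γ u) c' = u + d := fun u hu => by
    rw [← hγc', hγ.dist_eq, dist_eq, sub_neg_eq_add, abs_of_nonneg (by linarith)]
  have hdr : r + d ≤ r' := hdist' r hr ▸ hsub (hdist r hr).le
  have hmaps : ∀ u ∈ Icc r (r' - d), γ u ∈ closedBall c' r' \ ball c r := fun u hu => by
    rw [Set.mem_sdiff, mem_closedBall, mem_ball, hdist u (hr.trans hu.1), hdist' u (hr.trans hu.1)]
    exact ⟨by linarith [hu.2], hu.1.not_gt⟩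
  have hincrement : ‖f (γ (r' - d)) - f (γ r)‖ ≤ 1 * ‖γ (r' - d) - γ r‖ :=
    ((convex_Icc r (r' - d)).affine_image γ).norm_image_sub_le_of_norm_fderiv_le
      (forall_mem_image.2 fun u hu => hf _ (hmaps u hu))
      (forall_mem_image.2 fun u hu => hf' _ (hmaps u hu))
      (mem_image_of_mem γ (left_mem_Icc.2 (by linarith)))
      (mem_image_of_mem γ (right_mem_Icc.2 (by linarith)))
  have hstart : f (γ r) = r := hinner _ (hdist r hr)
  have hend : f (γ (r' - d)) = r' :=
    houter _ ((hdist' _ (by linarith)).trans (sub_add_cancel _ _))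
  rw [hstart, hend, one_mul, ← dist_eq_norm, ← dist_eq_norm, hγ.dist_eq, dist_eq, dist_eq,
    abs_of_nonneg (by linarith), abs_of_nonneg (by linarith)] at hincrement
  linarith

variable {R : ℝ → ℝ} {V : E → ℝ}

theorem IsRadialProfile.hasFDerivAt_profileInv_comp (hR : IsRadialProfile R) {x : E}
    (hV : DifferentiableAt ℝ V x) (hr : 0 < r) (hRr : 0 < R r) (hVx : V x = R r) :
    HasFDerivAt (profileInv R ∘ V) ((deriv R r)⁻¹ • fderiv ℝ V x) x :=
  HasDerivAt.comp_hasFDerivAt x (hVx ▸ hR.hasDerivAt_profileInv hr hRr) hV.hasFDerivAt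

theorem IsRadialProfile.norm_fderiv_profileInv_comp_le_one (hR : IsRadialProfile R) {x : E}
    (hV : DifferentiableAt ℝ V x) (hr : 0 < r) (hRr : 0 < R r) (hVx : V x = R r)
    (hgrad : ‖fderiv ℝ V x‖ ≤ |deriv R r|) : ‖fderiv ℝ (profileInv R ∘ V) x‖ ≤ 1 := by
  rw [(hR.hasFDerivAt_profileInv_comp hV hr hRr hVx).fderiv, norm_smul, norm_inv, norm_eq_abs]
  exact inv_mul_le_one_of_le₀ hgrad (abs_nonneg _)

theorem HasLevelSphere.center_eq (hR : IsRadialProfile R) (hV : Differentiable ℝ V)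
    (hgrad : ∀ x t, 0 < t → 0 < R t → V x = R t → ‖fderiv ℝ V x‖ ≤ |deriv R t|)
    (hr : 0 < r) (hrr' : r < r') (hRr' : 0 < R r')
    (h : HasLevelSphere V (R r) c r) (h' : HasLevelSphere V (R r') c' r') : c = c' := by
  have hlt : R r' < R r := hR.apply_lt_apply_of_lt hr.le hrr' hRr'
  have hRr : 0 < R r := hRr'.trans hlt
  have hradius : ∀ x ∈ closedBall c' r' \ ball c r, ∃ t, 0 < t ∧ 0 < R t ∧ V x = R t := by
    rintro x ⟨hx', hx⟩
    have hVx : V x ∈ Icc (R r') (R r) := ⟨(h'.le_iff x).2 hx', not_lt.1 (mt (h.lt_iff x).1 hx)⟩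
    have hVx' : V x ∈ Ioo 0 (R 0) :=
      ⟨hRr'.trans_le hVx.1, hVx.2.trans_lt (hR.apply_mem_Ioo hr hRr).2⟩
    obtain ⟨t, ht, hRt⟩ := hR.exists_pos_apply_eq hVx'
    exact ⟨t, ht, hRt ▸ hVx'.1, hRt.symm⟩
  refine center_eq_of_norm_fderiv_le_one (f := profileInv R ∘ V) hr.le
    (fun x hx => (h'.le_iff x).1 (hlt.le.trans ((h.le_iff x).2 hx)))
    (fun x hx => ?_) (fun x hx => ?_) (fun x hx => ?_) (fun x hx => ?_)
  · obtain ⟨t, ht, hRt, hVx⟩ := hradius x hx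
    exact (hR.hasFDerivAt_profileInv_comp (hV x) ht hRt hVx).differentiableAt
  · obtain ⟨t, ht, hRt, hVx⟩ := hradius x hx
    exact hR.norm_fderiv_profileInv_comp_le_one (hV x) ht hRt hVx (hgrad x t ht hRt hVx)
  · rw [Function.comp_apply, (h.eq_iff x).2 hx, hR.profileInv_apply hr hRr]
  · rw [Function.comp_apply, (h'.eq_iff x).2 hx, hR.profileInv_apply (hr.trans hrr') hRr']

end Concentric

section Volume

variable {E : Type*} [NormedAddCommGroup E] [NormedSpace ℝ E] [FiniteDimensional ℝ E]
  [Nontrivial E] [MeasurableSpace E] [BorelSpace E] (μ : Measure E) [μ.IsAddHaarMeasure]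

theorem radius_eq_of_measure_ball_eq {c c' : E} {r r' : ℝ} (hr : 0 ≤ r) (hr' : 0 ≤ r')
    (h : μ (ball c r) = μ (ball c' r')) : r = r' := by
  rw [Measure.addHaar_ball μ c hr, Measure.addHaar_ball μ c' hr',
    ENNReal.mul_left_inj (measure_ball_pos μ 0 one_pos).ne' measure_ball_lt_top.ne,
    ENNReal.ofReal_eq_ofReal_iff (by positivity) (by positivity)] at h
  exact (pow_left_inj₀ hr hr' Module.finrank_pos.ne').1 h

theorem IsRadialProfile.exists_hasLevelSphere {R : ℝ → ℝ} (hR : IsRadialProfile R) {V : E → ℝ}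
    (hV : Continuous V) (hlim : Tendsto V (cobounded E) (𝓝 0)) {r : ℝ} (hr : 0 < r)
    (hRr : 0 < R r) (hvol : μ {x | R r < V x} = μ {x | R r < R ‖x‖})
    (hlevel : ∃ c : E, ∃ ρ : ℝ, 0 < ρ ∧ {x | V x = R r} = sphere c ρ) :
    ∃ c, HasLevelSphere V (R r) c r := by
  obtain ⟨c, ρ, hρ, hsphere⟩ := hlevel
  have hradial : {x : E | R r < R ‖x‖} = ball 0 r := by
    ext x
    rw [mem_ball_zero_iff, Set.mem_ofPred_eq, hR.apply_lt_apply_iff (norm_nonneg x) hr hRr]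
  rw [hradial] at hvol
  have hne : {x | R r < V x}.Nonempty :=
    nonempty_of_measure_ne_zero (hvol ▸ (measure_ball_pos μ 0 hr).ne')
  have h : HasLevelSphere V (R r) c ρ := .of_level_eq_sphere hV hlim hRr hρ hsphere hne
  have hball : {x | R r < V x} = ball c ρ := Set.ext h.lt_iff
  have hρr : ρ = r := radius_eq_of_measure_ball_eq μ hρ.le hr.le (hball ▸ hvol)
  exact ⟨c, hρr ▸ h⟩

end Volume

section Radial

variable {E : Type*} [NormedAddCommGroup E] {R : ℝ → ℝ} {V : E → ℝ} {c : E}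

theorem IsRadialProfile.eq_apply_norm_sub_of_ne (hR : IsRadialProfile R) (hVnn : ∀ x, 0 ≤ V x)
    (h : ∀ r, 0 < r → 0 < R r → HasLevelSphere V (R r) c r) {x : E} (hx : x ≠ c) :
    V x = R ‖x - c‖ := by
  have hpos : 0 < ‖x - c‖ := norm_pos_iff.2 (sub_ne_zero.2 hx)
  rcases (hR.nonneg _ hpos.le).eq_or_lt with hzero | hRpos
  · rw [← hzero]
    refine (hVnn x).antisymm' (not_lt.1 fun hVx => ?_)
    obtain ⟨s, hs, hsmin⟩ := exists_between (lt_min hVx hR.apply_zero_pos)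
    obtain ⟨r, hr, rfl⟩ := hR.exists_pos_apply_eq ⟨hs, hsmin.trans_le (min_le_right _ _)⟩
    have hlt : ‖x - c‖ < r := by
      rw [← dist_eq_norm]
      exact ((h r hr hs).lt_iff x).1 (hsmin.trans_le (min_le_left _ _))
    linarith [hR.apply_lt_apply_of_lt hpos.le hlt hs]
  · exact ((h _ hpos hRpos).eq_iff x).2 (dist_eq_norm x c)

theorem IsRadialProfile.eq_apply_norm_sub [NormedSpace ℝ E] [Nontrivial E]
    (hR : IsRadialProfile R) (hV : Continuous V) (hVnn : ∀ x, 0 ≤ V x)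
    (h : ∀ r, 0 < r → 0 < R r → HasLevelSphere V (R r) c r) (x : E) : V x = R ‖x - c‖ := by
  have hcont : Continuous fun y => R ‖y - c‖ :=
    hR.continuousOn.comp_continuous (by fun_prop) fun y => norm_nonneg _
  have : (𝓝[≠] c).NeBot := Module.punctured_nhds_neBot ℝ E c
  exact congrFun (hV.ext_on (dense_compl_singleton c) hcont
    fun y hy => hR.eq_apply_norm_sub_of_ne hVnn h hy) x

end Radial

theorem statement15_general {E : Type*} [NormedAddCommGroup E] [NormedSpace ℝ E]
    [FiniteDimensional ℝ E] [Nontrivial E] [MeasurableSpace E] [BorelSpace E] (μ : Measure E)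
    [μ.IsAddHaarMeasure] {R : ℝ → ℝ} (hR : IsRadialProfile R) {V : E → ℝ}
    (hV : Differentiable ℝ V) (hVnn : ∀ x, 0 ≤ V x) (hlim : Tendsto V (cobounded E) (𝓝 0))
    (hvol : ∀ s, 0 < s → s < R 0 → μ {x | s < V x} = μ {x | s < R ‖x‖})
    (hlevel : ∀ s, 0 < s → s < R 0 → ∃ c : E, ∃ ρ : ℝ, 0 < ρ ∧ {x | V x = s} = sphere c ρ)
    (hgrad : ∀ x r, 0 < r → 0 < R r → V x = R r → ‖fderiv ℝ V x‖ ≤ |deriv R r|) :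
    ∃ x₀ : E, ∀ x, V x = R ‖x - x₀‖ := by
  have hsphere : ∀ r, 0 < r → 0 < R r → ∃ c, HasLevelSphere V (R r) c r := fun r hr hRr =>
    have hlt : R r < R 0 := (hR.apply_mem_Ioo hr hRr).2
    hR.exists_hasLevelSphere μ hV.continuous hlim hr hRr (hvol _ hRr hlt) (hlevel _ hRr hlt)
  choose! c hc using hsphere
  obtain ⟨s, hs⟩ := exists_between hR.apply_zero_pos
  obtain ⟨a, ha, rfl⟩ := hR.exists_pos_apply_eq hs
  have hcenter : ∀ r, 0 < r → 0 < R r → c r = c a := by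
    intro r hr hRr
    rcases lt_trichotomy r a with hra | rfl | har
    · exact (hc r hr hRr).center_eq hR hV hgrad hr hra hs.1 (hc a ha hs.1)
    · rfl
    · exact ((hc a ha hs.1).center_eq hR hV hgrad ha har hRr (hc r hr hRr)).symm
  exact ⟨c a, hR.eq_apply_norm_sub hV.continuous hVnn fun r hr hRr =>
    hcenter r hr hRr ▸ hc r hr hRr⟩

theorem statement15 (n : ℕ) (hn : 1 ≤ n)
    (R : ℝ → ℝ) (hR : ContDiffOn ℝ (⊤ : ℕ∞) R (Set.Ici 0))
    (hRnn : ∀ r, 0 ≤ r → 0 ≤ R r)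
    (hRne : ∃ r, 0 ≤ r ∧ R r ≠ 0)
    (hRdec : ∃ ε A B : ℝ, 0 < ε ∧ 0 < A ∧ 0 < B ∧
      ∀ r, 0 ≤ r → R r ≤ A * Real.exp (-B * r ^ (1 + ε)))
    (hR' : ∀ r, 0 ≤ r → deriv R r = 0 → r = 0 ∨ R r = 0)
    (V₀ : EuclideanSpace ℝ (Fin n) → ℝ) (hV₀ : ∀ x, V₀ x = R ‖x‖)
    (V : EuclideanSpace ℝ (Fin n) → ℝ)
    (hV : ContDiff ℝ (⊤ : ℕ∞) V) (hVnn : ∀ x, 0 ≤ V x)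
    (hVdec : ∃ ε A B : ℝ, 0 < ε ∧ 0 < A ∧ 0 < B ∧
      ∀ x, V x ≤ A * Real.exp (-B * ‖x‖ ^ (1 + ε)))
    -- (i): the superlevel sets of `V` and `V₀` have equal volumes
    (hvol : ∀ s : ℝ, 0 < s → volume {x | s < V x} = volume {x | s < V₀ x})
    -- (ii): each level set `{V = s}`, `0 < s < R 0`, is a Euclidean sphere
    (hlev : ∀ s : ℝ, 0 < s → s < R 0 →
      ∃ c : EuclideanSpace ℝ (Fin n), ∃ ρ : ℝ, 0 < ρ ∧
        {x | V x = s} = Metric.sphere c ρ)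
    -- (iii): `|∇V(x)| = |R'(R⁻¹(V(x)))|` whenever `0 < V x < R 0`, where `R⁻¹(V x)`
    -- is the unique `r > 0` with `R r = V x`
    (hgrad : ∀ x, 0 < V x → V x < R 0 →
      ∀ r : ℝ, 0 < r → R r = V x → ‖gradient V x‖ = |deriv R r|) :
    ∃ x₀ : EuclideanSpace ℝ (Fin n), ∀ x, V x = V₀ (x - x₀) := by
  obtain ⟨ε, A, B, hε, -, hB, hRbound⟩ := hRdec
  obtain ⟨ε', A', B', hε', -, hB', hVbound⟩ := hVdec
  have : Nonempty (Fin n) := ⟨⟨0, hn⟩⟩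
  have hprofile : IsRadialProfile R := by
    refine ⟨hR.continuousOn, hRnn, hRne, ?_, fun r hr h => (hR' r hr.le h).resolve_left hr.ne'⟩
    exact tendsto_zero_of_le_mul_exp_neg_rpow hε hB tendsto_id
      ((eventually_ge_atTop 0).mono hRnn) ((eventually_ge_atTop 0).mono hRbound)
  have hlim : Tendsto V (cobounded _) (𝓝 0) :=
    tendsto_zero_of_le_mul_exp_neg_rpow hε' hB' tendsto_norm_cobounded_atTop
      (.of_forall hVnn) (.of_forall hVbound)
  simp only [hV₀] at hvol ⊢
  refine statement15_general volume hprofile (hV.differentiable (by simp)) hVnn hlim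
    (fun s hs _ => hvol s hs) hlev fun x r hr hRr hVx => ?_
  rw [← norm_gradient_eq_norm_fderiv]
  exact (hgrad x (hVx ▸ hRr) (hVx ▸ (hprofile.apply_mem_Ioo hr hRr).2) r hr hVx.symm).le
end
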